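/- Suppose the proxy reward r_P and ground truth reward r_G agree on all outputs outside a set Z ⊆ Y, i.e. r_P(y) = r_G(y) for all y ∈ Y \ Z. Let θ_t and θ^G_t be gradient flows maximizing V_P and V_G respectively, started from the same initial parameters θ_0 = θ^G_0. Let B = max_{y∈Y} ‖φ(y)‖ and Δ_Z = max_{y∈Z} |r_P(y) − r_G(y)|. For any time horizon T ≥ 0 and any ε > 0, if Δ_Z · π_{θ_0}(Z) · exp(10 B² T) ≤ 2ε, then for all t ∈ [0, T] the total variation distance satisfies TV(π_{θ_t}, π_{θ^G_t}) ≤ ε. -/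

import Mathlib

open scoped BigOperators RealInnerProductSpace

noncomputable def policy {Y : Type*} [Fintype Y] {D : ℕ}
    (φ : Y → EuclideanSpace ℝ (Fin D)) (θ : EuclideanSpace ℝ (Fin D)) (y : Y) : ℝ :=
  Real.exp ⟪φ y, θ⟫ / ∑ z, Real.exp ⟪φ z, θ⟫

noncomputable def expReward {Y : Type*} [Fintype Y] {D : ℕ}
    (φ : Y → EuclideanSpace ℝ (Fin D)) (r : Y → ℝ) (θ : EuclideanSpace ℝ (Fin D)) : ℝ :=
  ∑ y, policy φ θ y * r y

/-! Suppose `‖φ y‖ ≤ B`. The law `π_θ` then depends on `θ` in two quantitatively different ways.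
Pointwise, the likelihood ratio `π_θ(y) / π_η(y)` is at most `exp (2 B ‖θ - η‖)`; as gradient flow
for rewards in `[-C, C]` moves at speed at most `2 B C`, the expected reward discrepancy
`E_{π_θ} |r_P - r_G|` grows at most by a factor `exp (4 C B² t)`. In `ℓ¹`, the map `θ ↦ π_θ` is
`2B`-Lipschitz, which makes `∇V_G` Lipschitz with constant `6 C B²`. The proxy flow solves the
ground truth equation up to the error `∇V_P - ∇V_G`, of norm at most `2 B E_{π_θ} |r_P - r_G|`, so
Grönwall's inequality bounds the distance of the two flows and contributes the remaining factor
`exp (6 C B² t)`. -/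

open scoped Gradient
open Set

section NormedSpace

variable {E : Type*} [NormedAddCommGroup E] [NormedSpace ℝ E]

theorem norm_smul_le_mul_of_le {c a b : ℝ} {x : E} (hc : |c| ≤ a) (hx : ‖x‖ ≤ b) :
    ‖c • x‖ ≤ a * b :=
  (norm_smul_le c x).trans (mul_le_mul hc hx (norm_nonneg x) ((abs_nonneg c).trans hc))

theorem norm_sum_smul_le_mul_sum_abs {ι : Type*} (s : Finset ι) (c : ι → ℝ) {u : ι → E} {K : ℝ}
    (hu : ∀ i ∈ s, ‖u i‖ ≤ K) : ‖∑ i ∈ s, c i • u i‖ ≤ K * ∑ i ∈ s, |c i| := by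
  rw [Finset.mul_sum]
  refine norm_sum_le_of_le s fun i hi => ?_
  rw [mul_comm]
  exact norm_smul_le_mul_of_le le_rfl (hu i hi)

theorem mul_gronwallBound (c δ K ε x : ℝ) :
    c * gronwallBound δ K ε x = gronwallBound (c * δ) K (c * ε) x := by
  unfold gronwallBound
  split_ifs <;> ring

theorem gronwallBound_zero_mul (K M x : ℝ) :
    gronwallBound 0 K (K * M) x = M * (Real.exp (K * x) - 1) := by
  rcases eq_or_ne K 0 with rfl | hK
  · simp [gronwallBound_K0]
  · simp [gronwallBound_of_K_ne_0 hK, hK]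

theorem dist_le_gronwallBound_of_isIntegralCurveOn {v w : ℝ → E → E} {K : NNReal} {f g : ℝ → E}
    {a b δ ε : ℝ} (hv : ∀ t, LipschitzWith K (v t)) (hf : IsIntegralCurveOn f w (Icc a b))
    (hg : IsIntegralCurveOn g v (Icc a b)) (hε : ∀ t ∈ Ico a b, dist (w t (f t)) (v t (f t)) ≤ ε)
    (hδ : dist (f a) (g a) ≤ δ) {t : ℝ} (ht : t ∈ Icc a b) :
    dist (f t) (g t) ≤ gronwallBound δ K ε (t - a) := by
  have hasDerivWithinAt_Ici {h : ℝ → E} {u : ℝ → E → E} (hh : IsIntegralCurveOn h u (Icc a b)) :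
      ∀ s ∈ Ico a b, HasDerivWithinAt h (u s (h s)) (Ici s) s := fun s hs =>
    (hh s (Ico_subset_Icc_self hs)).mono_of_mem_nhdsWithin (Icc_mem_nhdsGE_of_mem hs)
  simpa only [add_zero] using dist_le_of_approx_trajectories_ODE hv
    hf.continuousOn (hasDerivWithinAt_Ici hf) hε
    hg.continuousOn (hasDerivWithinAt_Ici hg) (fun s _ => (dist_self _).le) hδ t ht

end NormedSpace

section Policy

variable {Y : Type*} [Fintype Y] {D : ℕ} {φ : Y → EuclideanSpace ℝ (Fin D)} {B C : ℝ}

theorem sum_exp_inner_pos [Nonempty Y] (φ : Y → EuclideanSpace ℝ (Fin D))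
    (θ : EuclideanSpace ℝ (Fin D)) : 0 < ∑ z, Real.exp ⟪φ z, θ⟫ :=
  Finset.sum_pos (fun _ _ => Real.exp_pos _) Finset.univ_nonempty

theorem policy_nonneg (φ : Y → EuclideanSpace ℝ (Fin D)) (θ : EuclideanSpace ℝ (Fin D)) (y : Y) :
    0 ≤ policy φ θ y :=
  div_nonneg (Real.exp_pos _).le (Finset.sum_nonneg fun _ _ => (Real.exp_pos _).le)

theorem sum_policy [Nonempty Y] (φ : Y → EuclideanSpace ℝ (Fin D))
    (θ : EuclideanSpace ℝ (Fin D)) : ∑ y, policy φ θ y = 1 := by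
  simp only [policy]
  rw [← Finset.sum_div, div_self (sum_exp_inner_pos φ θ).ne']

theorem sum_abs_policy [Nonempty Y] (φ : Y → EuclideanSpace ℝ (Fin D))
    (θ : EuclideanSpace ℝ (Fin D)) : ∑ y, |policy φ θ y| = 1 := by
  simp only [abs_of_nonneg (policy_nonneg φ θ _), sum_policy]

theorem sum_abs_policy_mul (φ : Y → EuclideanSpace ℝ (Fin D)) (r : Y → ℝ)
    (θ : EuclideanSpace ℝ (Fin D)) :
    ∑ y, |policy φ θ y * r y| = expReward φ (fun y => |r y|) θ := by
  simp only [expReward, abs_mul, abs_of_nonneg (policy_nonneg φ θ _)]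

theorem expReward_nonneg {r : Y → ℝ} (hr : ∀ y, 0 ≤ r y) (φ : Y → EuclideanSpace ℝ (Fin D))
    (θ : EuclideanSpace ℝ (Fin D)) : 0 ≤ expReward φ r θ :=
  Finset.sum_nonneg fun y _ => mul_nonneg (policy_nonneg φ θ y) (hr y)

theorem abs_expReward_le [Nonempty Y] {r : Y → ℝ} (hr : ∀ y, |r y| ≤ C)
    (φ : Y → EuclideanSpace ℝ (Fin D)) (θ : EuclideanSpace ℝ (Fin D)) :
    |expReward φ r θ| ≤ C := by
  have h := norm_sum_smul_le_mul_sum_abs Finset.univ (policy φ θ) (u := r) fun y _ => hr y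
  rwa [sum_abs_policy, mul_one] at h

theorem expReward_le_mul_sum_policy {r : Y → ℝ} {Z : Finset Y} {Δ : ℝ} (hZ : ∀ y ∈ Z, r y ≤ Δ)
    (hZc : ∀ y ∉ Z, r y = 0) (φ : Y → EuclideanSpace ℝ (Fin D)) (θ : EuclideanSpace ℝ (Fin D)) :
    expReward φ r θ ≤ Δ * ∑ y ∈ Z, policy φ θ y := by
  have hsum : expReward φ r θ = ∑ y ∈ Z, policy φ θ y * r y :=
    (Finset.sum_subset Z.subset_univ fun y _ hy => by rw [hZc y hy, mul_zero]).symm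
  rw [hsum, Finset.mul_sum]
  refine Finset.sum_le_sum fun y hy => ?_
  rw [mul_comm]
  exact mul_le_mul_of_nonneg_right (hZ y hy) (policy_nonneg φ θ y)

theorem exp_inner_le_exp_mul_exp_inner {F : Type*} [NormedAddCommGroup F] [InnerProductSpace ℝ F]
    {x : F} (hx : ‖x‖ ≤ B) (θ θ' : F) :
    Real.exp ⟪x, θ⟫ ≤ Real.exp (B * ‖θ - θ'‖) * Real.exp ⟪x, θ'⟫ := by
  rw [← Real.exp_add, Real.exp_le_exp, ← sub_le_iff_le_add, ← inner_sub_right]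
  exact (real_inner_le_norm _ _).trans (mul_le_mul_of_nonneg_right hx (norm_nonneg _))

theorem policy_le_exp_mul_policy (hB : ∀ y, ‖φ y‖ ≤ B) (θ θ' : EuclideanSpace ℝ (Fin D)) (y : Y) :
    policy φ θ y ≤ Real.exp (2 * B * ‖θ - θ'‖) * policy φ θ' y := by
  have : Nonempty Y := ⟨y⟩
  have hsum : ∑ z, Real.exp ⟪φ z, θ'⟫ ≤ Real.exp (B * ‖θ - θ'‖) * ∑ z, Real.exp ⟪φ z, θ⟫ := by
    rw [Finset.mul_sum, norm_sub_rev]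
    exact Finset.sum_le_sum fun z _ => exp_inner_le_exp_mul_exp_inner (hB z) θ' θ
  rw [policy, policy, ← mul_div_assoc,
    div_le_div_iff₀ (sum_exp_inner_pos φ θ) (sum_exp_inner_pos φ θ')]
  calc Real.exp ⟪φ y, θ⟫ * ∑ z, Real.exp ⟪φ z, θ'⟫
      ≤ (Real.exp (B * ‖θ - θ'‖) * Real.exp ⟪φ y, θ'⟫) *
          (Real.exp (B * ‖θ - θ'‖) * ∑ z, Real.exp ⟪φ z, θ⟫) := by
        gcongr
        exact exp_inner_le_exp_mul_exp_inner (hB y) θ θ'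
    _ = Real.exp (2 * B * ‖θ - θ'‖) * Real.exp ⟪φ y, θ'⟫ * ∑ z, Real.exp ⟪φ z, θ⟫ := by
        rw [mul_assoc 2, two_mul (B * _), Real.exp_add]
        ring

theorem expReward_le_exp_mul_expReward (hB : ∀ y, ‖φ y‖ ≤ B) {r : Y → ℝ} (hr : ∀ y, 0 ≤ r y)
    (θ θ' : EuclideanSpace ℝ (Fin D)) :
    expReward φ r θ ≤ Real.exp (2 * B * ‖θ - θ'‖) * expReward φ r θ' := by
  simp only [expReward, Finset.mul_sum, ← mul_assoc]
  exact Finset.sum_le_sum fun y _ =>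
    mul_le_mul_of_nonneg_right (policy_le_exp_mul_policy hB θ θ' y) (hr y)

/-- The mean of the feature map under the policy `π_θ`, i.e. the gradient of the log-partition
function at `θ`; policy gradients are expressed through features centred at it. -/
noncomputable def meanFeature (φ : Y → EuclideanSpace ℝ (Fin D)) (θ : EuclideanSpace ℝ (Fin D)) :
    EuclideanSpace ℝ (Fin D) :=
  ∑ y, policy φ θ y • φ y

theorem norm_meanFeature_le [Nonempty Y] (hB : ∀ y, ‖φ y‖ ≤ B) (θ : EuclideanSpace ℝ (Fin D)) :
    ‖meanFeature φ θ‖ ≤ B := by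
  have h := norm_sum_smul_le_mul_sum_abs Finset.univ (policy φ θ) fun y _ => hB y
  rwa [sum_abs_policy, mul_one] at h

theorem norm_sub_meanFeature_le (hB : ∀ y, ‖φ y‖ ≤ B) (θ : EuclideanSpace ℝ (Fin D)) (y : Y) :
    ‖φ y - meanFeature φ θ‖ ≤ 2 * B := by
  have : Nonempty Y := ⟨y⟩
  rw [two_mul]
  exact norm_sub_le_of_le (hB y) (norm_meanFeature_le hB θ)

theorem norm_meanFeature_sub_le (hB : ∀ y, ‖φ y‖ ≤ B) (θ θ' : EuclideanSpace ℝ (Fin D)) :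
    ‖meanFeature φ θ - meanFeature φ θ'‖ ≤ B * ∑ y, |policy φ θ y - policy φ θ' y| := by
  simp only [meanFeature, ← Finset.sum_sub_distrib, ← sub_smul]
  exact norm_sum_smul_le_mul_sum_abs _ _ fun y _ => hB y

theorem hasGradientAt_log_sum_exp_inner [Nonempty Y] (φ : Y → EuclideanSpace ℝ (Fin D))
    (θ : EuclideanSpace ℝ (Fin D)) :
    HasGradientAt (fun θ => Real.log (∑ z, Real.exp ⟪φ z, θ⟫)) (meanFeature φ θ) θ := by
  have hsum : HasFDerivAt (fun θ : EuclideanSpace ℝ (Fin D) => ∑ z, Real.exp ⟪φ z, θ⟫)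
      (∑ z, Real.exp ⟪φ z, θ⟫ • innerSL ℝ (φ z)) θ :=
    HasFDerivAt.fun_sum fun z _ => (innerSL ℝ (φ z)).hasFDerivAt.exp
  rw [hasGradientAt_iff_hasFDerivAt]
  refine (hsum.log (sum_exp_inner_pos φ θ).ne').congr_fderiv ?_
  simp only [meanFeature, policy, map_sum, map_smul, Finset.smul_sum, smul_smul, div_eq_inv_mul]
  rfl

theorem policy_eq_exp_sub_log (φ : Y → EuclideanSpace ℝ (Fin D)) (θ : EuclideanSpace ℝ (Fin D))
    (y : Y) : policy φ θ y = Real.exp (⟪φ y, θ⟫ - Real.log (∑ z, Real.exp ⟪φ z, θ⟫)) := by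
  have : Nonempty Y := ⟨y⟩
  rw [policy, Real.exp_sub, Real.exp_log (sum_exp_inner_pos φ θ)]

theorem hasGradientAt_policy (φ : Y → EuclideanSpace ℝ (Fin D)) (θ : EuclideanSpace ℝ (Fin D))
    (y : Y) :
    HasGradientAt (fun θ => policy φ θ y) (policy φ θ y • (φ y - meanFeature φ θ)) θ := by
  have : Nonempty Y := ⟨y⟩
  have hscore := (innerSL ℝ (φ y)).hasFDerivAt.sub (hasGradientAt_log_sum_exp_inner φ θ).hasFDerivAt
  simp only [policy_eq_exp_sub_log φ _ y]
  rw [hasGradientAt_iff_hasFDerivAt]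
  refine hscore.exp.congr_fderiv ?_
  rw [map_smul, map_sub]
  rfl

theorem hasGradientAt_expReward (φ : Y → EuclideanSpace ℝ (Fin D)) (r : Y → ℝ)
    (θ : EuclideanSpace ℝ (Fin D)) :
    HasGradientAt (expReward φ r)
      (∑ y, (policy φ θ y * r y) • (φ y - meanFeature φ θ)) θ := by
  rw [hasGradientAt_iff_hasFDerivAt]
  have h : HasFDerivAt (expReward φ r) _ θ := HasFDerivAt.fun_sum fun y _ =>
    (hasGradientAt_policy φ θ y).hasFDerivAt.mul_const (r y)
  refine h.congr_fderiv ?_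
  simp only [map_sum, map_smul, smul_smul, mul_comm]

theorem gradient_expReward (φ : Y → EuclideanSpace ℝ (Fin D)) (r : Y → ℝ)
    (θ : EuclideanSpace ℝ (Fin D)) :
    ∇ (expReward φ r) θ = ∑ y, (policy φ θ y * r y) • (φ y - meanFeature φ θ) :=
  (hasGradientAt_expReward φ r θ).gradient

theorem gradient_expReward_sub (φ : Y → EuclideanSpace ℝ (Fin D)) (r r' : Y → ℝ)
    (θ : EuclideanSpace ℝ (Fin D)) :
    ∇ (expReward φ fun y => r y - r' y) θ = ∇ (expReward φ r) θ - ∇ (expReward φ r') θ := by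
  simp only [gradient_expReward, mul_sub, sub_smul, Finset.sum_sub_distrib]

theorem norm_gradient_expReward_le (hB : ∀ y, ‖φ y‖ ≤ B) (r : Y → ℝ)
    (θ : EuclideanSpace ℝ (Fin D)) :
    ‖∇ (expReward φ r) θ‖ ≤ 2 * B * expReward φ (fun y => |r y|) θ := by
  rw [gradient_expReward, ← sum_abs_policy_mul]
  exact norm_sum_smul_le_mul_sum_abs _ _ fun y _ => norm_sub_meanFeature_le hB θ y

theorem norm_gradient_expReward_le_of_abs_le [Nonempty Y] (hB : ∀ y, ‖φ y‖ ≤ B) {r : Y → ℝ}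
    (hr : ∀ y, |r y| ≤ C) (θ : EuclideanSpace ℝ (Fin D)) :
    ‖∇ (expReward φ r) θ‖ ≤ 2 * B * C := by
  have hB₀ : 0 ≤ B := (norm_nonneg _).trans (hB (Classical.arbitrary Y))
  have habs : expReward φ (fun y => |r y|) θ ≤ C :=
    (le_abs_self _).trans (abs_expReward_le (fun y => (abs_abs (r y)).trans_le (hr y)) φ θ)
  exact (norm_gradient_expReward_le hB r θ).trans
    (mul_le_mul_of_nonneg_left habs (by positivity))

-- The left side is the change in expected reward when the reward is the sign of the difference.
theorem sum_abs_policy_sub_le [Nonempty Y] (hB : ∀ y, ‖φ y‖ ≤ B)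
    (θ θ' : EuclideanSpace ℝ (Fin D)) :
    ∑ y, |policy φ θ y - policy φ θ' y| ≤ 2 * B * ‖θ - θ'‖ := by
  set σ : Y → ℝ := fun y => SignType.sign (policy φ θ y - policy φ θ' y)
  have hσ (y : Y) : |σ y| ≤ 1 := by
    simp only [σ]
    cases SignType.sign (policy φ θ y - policy φ θ' y) <;> simp
  have hsum : ∑ y, |policy φ θ y - policy φ θ' y| = expReward φ σ θ - expReward φ σ θ' := by
    simp only [expReward, ← Finset.sum_sub_distrib, ← sub_mul, σ, self_mul_sign]
  have hnorm (x : EuclideanSpace ℝ (Fin D)) :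
      ‖InnerProductSpace.toDual ℝ _ (∇ (expReward φ σ) x)‖ ≤ 2 * B := by
    rw [LinearIsometryEquiv.norm_map, ← mul_one (2 * B)]
    exact norm_gradient_expReward_le_of_abs_le hB hσ x
  rw [hsum]
  refine (le_abs_self _).trans (convex_univ.norm_image_sub_le_of_norm_hasFDerivWithin_le
    (fun x _ => ?_) (fun x _ => hnorm x) (mem_univ θ') (mem_univ θ))
  exact (hasGradientAt_expReward φ σ x).differentiableAt.hasGradientAt.hasFDerivAt.hasFDerivWithinAt

theorem gradient_expReward_sub_gradient_expReward (φ : Y → EuclideanSpace ℝ (Fin D)) (r : Y → ℝ)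
    (θ θ' : EuclideanSpace ℝ (Fin D)) :
    ∇ (expReward φ r) θ - ∇ (expReward φ r) θ' =
      ∑ y, (policy φ θ y - policy φ θ' y) • r y • (φ y - meanFeature φ θ) -
        expReward φ r θ' • (meanFeature φ θ - meanFeature φ θ') := by
  simp only [gradient_expReward, expReward, Finset.sum_smul, ← Finset.sum_sub_distrib]
  exact Finset.sum_congr rfl fun y _ => by module

theorem norm_gradient_expReward_sub_le [Nonempty Y] (hB : ∀ y, ‖φ y‖ ≤ B) {r : Y → ℝ}
    (hr : ∀ y, |r y| ≤ C) (θ θ' : EuclideanSpace ℝ (Fin D)) :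
    ‖∇ (expReward φ r) θ - ∇ (expReward φ r) θ'‖ ≤ 6 * C * B ^ 2 * ‖θ - θ'‖ := by
  have hB₀ : 0 ≤ B := (norm_nonneg _).trans (hB (Classical.arbitrary Y))
  have hC₀ : 0 ≤ C := (abs_nonneg _).trans (hr (Classical.arbitrary Y))
  set q := ∑ y, |policy φ θ y - policy φ θ' y|
  have hweights : ‖∑ y, (policy φ θ y - policy φ θ' y) • r y • (φ y - meanFeature φ θ)‖ ≤
      C * (2 * B) * q :=
    norm_sum_smul_le_mul_sum_abs _ _ fun y _ =>
      norm_smul_le_mul_of_le (hr y) (norm_sub_meanFeature_le hB θ y)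
  have hmean : ‖expReward φ r θ' • (meanFeature φ θ - meanFeature φ θ')‖ ≤ C * (B * q) :=
    norm_smul_le_mul_of_le (abs_expReward_le hr φ θ') (norm_meanFeature_sub_le hB θ θ')
  rw [gradient_expReward_sub_gradient_expReward]
  calc _ ≤ C * (2 * B) * q + C * (B * q) := norm_sub_le_of_le hweights hmean
    _ = 3 * C * B * q := by ring
    _ ≤ 3 * C * B * (2 * B * ‖θ - θ'‖) := by gcongr; exact sum_abs_policy_sub_le hB θ θ'
    _ = 6 * C * B ^ 2 * ‖θ - θ'‖ := by ring

end Policy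

section GradientFlow

variable {Y : Type*} [Fintype Y] [Nonempty Y] {D : ℕ} {φ : Y → EuclideanSpace ℝ (Fin D)}
  {B C T : ℝ}

theorem expReward_le_of_isIntegralCurveOn_gradient (hB : ∀ y, ‖φ y‖ ≤ B) {r w : Y → ℝ}
    (hr : ∀ y, |r y| ≤ C) (hw : ∀ y, 0 ≤ w y) {θ : ℝ → EuclideanSpace ℝ (Fin D)}
    (hθ : IsIntegralCurveOn θ (fun _ => ∇ (expReward φ r)) (Icc 0 T)) {t : ℝ} (ht : t ∈ Icc 0 T) :
    expReward φ w (θ t) ≤ Real.exp (4 * C * B ^ 2 * t) * expReward φ w (θ 0) := by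
  have hB₀ : 0 ≤ B := (norm_nonneg _).trans (hB (Classical.arbitrary Y))
  have hmove : ‖θ t - θ 0‖ ≤ 2 * B * C * (t - 0) :=
    norm_image_sub_le_of_norm_deriv_le_segment' hθ
      (fun s _ => norm_gradient_expReward_le_of_abs_le hB hr (θ s)) t ht
  calc expReward φ w (θ t)
      ≤ Real.exp (2 * B * ‖θ t - θ 0‖) * expReward φ w (θ 0) :=
        expReward_le_exp_mul_expReward hB hw _ _
    _ ≤ Real.exp (2 * B * (2 * B * C * (t - 0))) * expReward φ w (θ 0) := by
        gcongr
        exact expReward_nonneg hw φ _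
    _ = Real.exp (4 * C * B ^ 2 * t) * expReward φ w (θ 0) := by ring_nf

theorem dist_gradientFlow_le_gronwallBound (hB : ∀ y, ‖φ y‖ ≤ B) {r r' : Y → ℝ}
    (hr' : ∀ y, |r' y| ≤ C) {θ θ' : ℝ → EuclideanSpace ℝ (Fin D)}
    (hθ : IsIntegralCurveOn θ (fun _ => ∇ (expReward φ r)) (Icc 0 T))
    (hθ' : IsIntegralCurveOn θ' (fun _ => ∇ (expReward φ r')) (Icc 0 T)) (hinit : θ 0 = θ' 0)
    {M : ℝ} (hM : ∀ t ∈ Icc 0 T, expReward φ (fun y => |r y - r' y|) (θ t) ≤ M)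
    {t : ℝ} (ht : t ∈ Icc 0 T) :
    dist (θ t) (θ' t) ≤ gronwallBound 0 (6 * C * B ^ 2) (2 * B * M) t := by
  have hB₀ : 0 ≤ B := (norm_nonneg _).trans (hB (Classical.arbitrary Y))
  have hC₀ : 0 ≤ C := (abs_nonneg _).trans (hr' (Classical.arbitrary Y))
  have hlip : LipschitzWith (6 * C * B ^ 2).toNNReal (∇ (expReward φ r')) :=
    LipschitzWith.of_dist_le' fun x y => by
      simpa only [dist_eq_norm] using norm_gradient_expReward_sub_le hB hr' x y
  have hforce (s : ℝ) (hs : s ∈ Ico 0 T) :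
      dist (∇ (expReward φ r) (θ s)) (∇ (expReward φ r') (θ s)) ≤ 2 * B * M := by
    rw [dist_eq_norm, ← gradient_expReward_sub]
    exact (norm_gradient_expReward_le hB _ _).trans
      (mul_le_mul_of_nonneg_left (hM s (Ico_subset_Icc_self hs)) (by positivity))
  have h := dist_le_gronwallBound_of_isIntegralCurveOn (fun _ => hlip) hθ hθ' hforce
    (dist_eq_zero.2 hinit).le ht
  rwa [Real.coe_toNNReal _ (by positivity), sub_zero] at h

theorem tv_closeness_of_low_prob_errors_general (hB : ∀ y, ‖φ y‖ ≤ B) (hC : 0 < C)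
    {rP rG : Y → ℝ} (hrP : ∀ y, |rP y| ≤ C) (hrG : ∀ y, |rG y| ≤ C)
    {θt θGt : ℝ → EuclideanSpace ℝ (Fin D)}
    (hflowP : IsIntegralCurveOn θt (fun _ => ∇ (expReward φ rP)) (Icc 0 T))
    (hflowG : IsIntegralCurveOn θGt (fun _ => ∇ (expReward φ rG)) (Icc 0 T))
    (hinit : θt 0 = θGt 0) {t : ℝ} (ht : t ∈ Icc 0 T) :
    (1 / 2) * ∑ y, |policy φ (θt t) y - policy φ (θGt t) y| ≤
      expReward φ (fun y => |rP y - rG y|) (θt 0) / (2 * C) * Real.exp (10 * C * B ^ 2 * T) := by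
  have hB₀ : 0 ≤ B := (norm_nonneg _).trans (hB (Classical.arbitrary Y))
  set V₀ := expReward φ (fun y => |rP y - rG y|) (θt 0)
  have hV₀ : 0 ≤ V₀ := expReward_nonneg (fun _ => abs_nonneg _) φ _
  set M := Real.exp (4 * C * B ^ 2 * T) * V₀ with hM
  have hdrift (s : ℝ) (hs : s ∈ Icc 0 T) :
      expReward φ (fun y => |rP y - rG y|) (θt s) ≤ M :=
    (expReward_le_of_isIntegralCurveOn_gradient hB hrP (fun _ => abs_nonneg _) hflowP hs).trans
      (by rw [hM]; gcongr; exact hs.2)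
  calc (1 / 2) * ∑ y, |policy φ (θt t) y - policy φ (θGt t) y|
      ≤ (1 / 2) * (2 * B * ‖θt t - θGt t‖) := by
        gcongr
        exact sum_abs_policy_sub_le hB _ _
    _ ≤ B * gronwallBound 0 (6 * C * B ^ 2) (2 * B * M) t := by
        rw [mul_assoc, one_div, inv_mul_cancel_left₀ two_ne_zero, ← dist_eq_norm]
        gcongr
        exact dist_gradientFlow_le_gronwallBound hB hrG hflowP hflowG hinit hdrift ht
    _ = gronwallBound 0 (6 * C * B ^ 2) (6 * C * B ^ 2 * (M / (3 * C))) t := by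
        rw [mul_gronwallBound]
        congr 1
        · exact mul_zero B
        · field_simp
          ring
    _ = M / (3 * C) * (Real.exp (6 * C * B ^ 2 * t) - 1) := gronwallBound_zero_mul _ _ _
    _ ≤ M / (3 * C) * Real.exp (6 * C * B ^ 2 * t) := by
        gcongr
        exact sub_le_self _ zero_le_one
    _ ≤ M / (2 * C) * Real.exp (6 * C * B ^ 2 * T) := by
        gcongr
        · norm_num
        · exact ht.2
    _ = V₀ / (2 * C) * Real.exp (10 * C * B ^ 2 * T) := by
        rw [hM, mul_comm _ V₀, mul_div_right_comm, mul_assoc, ← Real.exp_add]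
        ring_nf

end GradientFlow

theorem tv_closeness_of_low_prob_errors {Y : Type*} [Fintype Y] [Nonempty Y] {D : ℕ}
    (φ : Y → EuclideanSpace ℝ (Fin D)) (hφ : ∀ y, φ y ≠ 0)
    (rP rG : Y → ℝ) (hrP : ∀ y, rP y ∈ Set.Icc (-1 : ℝ) 1)
    (hrG : ∀ y, rG y ∈ Set.Icc (-1 : ℝ) 1)
    (Z : Finset Y) (hZne : Z.Nonempty)
    (hagree : ∀ y : Y, y ∉ Z → rP y = rG y)
    (θt θGt : ℝ → EuclideanSpace ℝ (Fin D))
    (hflowP : ∀ t : ℝ, 0 ≤ t → HasDerivAt θt (gradient (expReward φ rP) (θt t)) t)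
    (hflowG : ∀ t : ℝ, 0 ≤ t → HasDerivAt θGt (gradient (expReward φ rG) (θGt t)) t)
    (hinit : θt 0 = θGt 0)
    (B ΔZ : ℝ)
    (hB : B = Finset.univ.sup' Finset.univ_nonempty fun y => ‖φ y‖)
    (hΔZ : ΔZ = Z.sup' hZne fun y => |rP y - rG y|)
    (T ε : ℝ) (hT : 0 ≤ T) (hε : 0 < ε)
    (hcond : ΔZ * (∑ y ∈ Z, policy φ (θt 0) y) * Real.exp (10 * B ^ 2 * T) ≤ 2 * ε) :
    ∀ t ∈ Set.Icc (0 : ℝ) T,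
      (1 / 2) * ∑ y, |policy φ (θt t) y - policy φ (θGt t) y| ≤ ε := by
  have hφB (y : Y) : ‖φ y‖ ≤ B := hB ▸ Finset.le_sup' (fun y => ‖φ y‖) (Finset.mem_univ y)
  have herr : expReward φ (fun y => |rP y - rG y|) (θt 0) ≤ ΔZ * ∑ y ∈ Z, policy φ (θt 0) y :=
    expReward_le_mul_sum_policy (fun y hy => hΔZ ▸ Finset.le_sup' (fun y => |rP y - rG y|) hy)
      (fun y hy => by rw [hagree y hy, sub_self, abs_zero]) φ _
  intro t ht
  calc (1 / 2) * ∑ y, |policy φ (θt t) y - policy φ (θGt t) y|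
      ≤ expReward φ (fun y => |rP y - rG y|) (θt 0) / (2 * 1) * Real.exp (10 * 1 * B ^ 2 * T) :=
        tv_closeness_of_low_prob_errors_general hφB one_pos (fun y => abs_le.2 (hrP y))
          (fun y => abs_le.2 (hrG y)) (fun s hs => (hflowP s hs.1).hasDerivWithinAt)
          (fun s hs => (hflowG s hs.1).hasDerivWithinAt) hinit ht
    _ ≤ (ΔZ * ∑ y ∈ Z, policy φ (θt 0) y) / (2 * 1) * Real.exp (10 * 1 * B ^ 2 * T) := by gcongr
    _ ≤ ε := by
        rw [mul_one, mul_one]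
        linarith
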